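/- Let ι be an index type of cardinality ℵ₂, let 𝓕 = ℚ(t_ν : ν ∈ ι) be the field of rational functions over ℚ in algebraically independent variables indexed by ι (i.e., the fraction field of the multivariate polynomial ring ℚ[t_ν : ν ∈ ι]), and let R = 𝓕[X] be the polynomial ring in one variable over 𝓕. Then every R-module A that is ℵ₁-generated, ℵ₁-free, and not free satisfies Ext¹_R(A, R) ≠ 0; in particular, every ℵ₁-generated ℵ₁-free Whitehead R-module is free. -/

import Mathlib

/-!
Statement 0 (Eklof–Shelah, "Whitehead modules over large principal ideal domains",
Theorem 1): There is a slender (local, not `p`-adically complete) p.i.d. `R` of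
cardinality `2 ^ ℵ₁` such that every `ℵ₁`-free `ℵ₁`-generated `R`-module is a
Whitehead module.
-/

open Cardinal

universe u

/-- The first Ext group `Ext¹_R(M, N)` (as a module, via the derived-functor `Ext`). -/
noncomputable def ext1 (R : Type u) [CommRing R] (M N : Type u) [AddCommGroup M] [Module R M]
    [AddCommGroup N] [Module R N] : ModuleCat R :=
  ((Ext R (ModuleCat.{u} R) 1).obj (Opposite.op (ModuleCat.of R M))).obj (ModuleCat.of R N)

/-- `M` is a Whitehead `R`-module: `Ext¹_R(M, R) = 0`. -/
def IsWhitehead (R : Type u) [CommRing R] (M : Type u) [AddCommGroup M] [Module R M] : Prop :=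
  Subsingleton (ext1 R M R)

/-- `M` is `κ`-generated: generated by a subset of cardinality `≤ κ`. -/
def IsGenerated (R : Type u) [Semiring R] (M : Type u) [AddCommMonoid M] [Module R M]
    (κ : Cardinal.{u}) : Prop :=
  ∃ S : Set M, #S ≤ κ ∧ Submodule.span R S = ⊤

/-- `M` is `κ`-free: every submodule generated by fewer than `κ` elements is free.
(So `ℵ₁`-free means every countably generated submodule is free.) -/
def IsKappaFree (R : Type u) [Ring R] (M : Type u) [AddCommGroup M] [Module R M]
    (κ : Cardinal.{u}) : Prop :=
  ∀ S : Set M, #S < κ → Module.Free R (Submodule.span R S)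

/-- `a` is a Cauchy sequence for the `p`-adic topology on `R`. -/
def PAdicCauchy {R : Type u} [CommRing R] (p : R) (a : ℕ → R) : Prop :=
  ∀ n : ℕ, ∃ N : ℕ, ∀ j ≥ N, ∀ k ≥ N, p ^ n ∣ (a j - a k)

/-- `L` is a limit of the sequence `a` in the `p`-adic topology on `R`. -/
def PAdicLimit {R : Type u} [CommRing R] (p : R) (a : ℕ → R) (L : R) : Prop :=
  ∀ n : ℕ, ∃ N : ℕ, ∀ j ≥ N, p ^ n ∣ (a j - L)

/-- `R` is not complete in the `p`-adic topology: there is a `p`-adically Cauchy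
sequence in `R` with no limit in `R`. -/
def NotPAdicComplete (R : Type u) [CommRing R] (p : R) : Prop :=
  ∃ a : ℕ → R, PAdicCauchy p a ∧ ∀ L : R, ¬ PAdicLimit p a L

section PID

variable {R I : Type*} [CommRing R] [IsDomain R] [IsPrincipalIdealRing R]

/-- A submodule of the free module on `I` over a principal ideal domain has a basis indexed by a
subset of `I`. -/
theorem Submodule.exists_basis_subset_finsupp (K : Submodule R (I →₀ R)) :
    ∃ E : Set I, Nonempty (Module.Basis E R K) := by
  classical
  obtain ⟨_, _⟩ := exists_wellFoundedLT I
  let L : I → Submodule R (I →₀ R) := fun i => K ⊓ Finsupp.supported R R (Set.Iic i)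
  let a : I → Ideal R := fun i => (L i).map (Finsupp.lapply i)
  have hgen : ∀ i, ∃ x ∈ L i, x i = IsPrincipal.generator (a i) := fun i =>
    IsPrincipal.generator_mem (a i)
  choose k hkL hki using hgen
  have hkK : ∀ i, k i ∈ K := fun i => (hkL i).1
  have hk_lt : ∀ i j, i < j → k i j = 0 := fun i j hij => by
    by_contra h
    exact absurd ((Finsupp.mem_supported R _).1 (hkL i).2 (Finsupp.mem_support_iff.2 h))
      (not_le.2 hij)
  let E : Set I := {i | k i i ≠ 0}
  have hli : LinearIndependent R (fun e : E => (⟨k e, hkK e⟩ : K)) := by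
    refine LinearIndependent.of_comp K.subtype ?_
    rw [linearIndependent_iff]
    intro c hc
    by_contra hne
    obtain ⟨m, hm, hmax⟩ := c.support.exists_max_image id (Finsupp.support_nonempty_iff.2 hne)
    have hval := DFunLike.congr_fun hc (m : I)
    rw [Finsupp.linearCombination_apply, Finsupp.sum, Finsupp.finsetSum_apply,
      Finset.sum_eq_single_of_mem m hm] at hval
    · have hval' : c m = 0 ∨ k m m = 0 := by simpa using hval
      rcases hval' with h | h
      · exact Finsupp.mem_support_iff.1 hm h
      · exact m.2 h
    · intro j hj hjm
      have : k j m = 0 := hk_lt _ _ (lt_of_le_of_ne (hmax j hj) (Subtype.coe_ne_coe.2 hjm))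
      simp [this]
  have hmax : ∀ x : K, x ≠ 0 → ∃ m, (x : I →₀ R) m ≠ 0 ∧ (x : I →₀ R) ∈ L m := fun x hx => by
    obtain ⟨m, hm, hmax⟩ := (x : I →₀ R).support.exists_max_image id (by simpa using hx)
    exact ⟨m, Finsupp.mem_support_iff.1 hm, x.2, (Finsupp.mem_supported R _).2 hmax⟩
  have hspan : ∀ i, ∀ x : K, (x : I →₀ R) ∈ L i →
      x ∈ span R (Set.range fun e : E => (⟨k e, hkK e⟩ : K)) := by
    intro i
    induction i using WellFoundedLT.induction with
    | ind i ih =>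
      have hlow : ∀ y : K, (y : I →₀ R) ∈ L i → (y : I →₀ R) i = 0 →
          y ∈ span R (Set.range fun e : E => (⟨k e, hkK e⟩ : K)) := by
        intro y hyL hyi
        rcases eq_or_ne y 0 with rfl | h0
        · exact zero_mem _
        · obtain ⟨m, hm, hmL⟩ := hmax y h0
          have hmi : m ≤ i := (Finsupp.mem_supported R _).1 hyL.2 (Finsupp.mem_support_iff.2 hm)
          exact ih m (lt_of_le_of_ne hmi fun h => hm (h ▸ hyi)) y hmL
      intro x hx
      have hxi : (x : I →₀ R) i ∈ a i := ⟨x, hx, rfl⟩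
      rw [← IsPrincipal.span_singleton_generator (a i), mem_span_singleton] at hxi
      obtain ⟨r, hr⟩ := hxi
      rw [← hki, smul_eq_mul] at hr
      by_cases hi : k i i = 0
      · exact hlow x hx (by rw [← hr, hi, mul_zero])
      · rw [← sub_add_cancel x (r • (⟨k i, hkK i⟩ : K))]
        exact add_mem
          (hlow _ ((L i).sub_mem hx ((L i).smul_mem r (hkL i))) (by simp [hr]))
          (smul_mem _ _ (subset_span ⟨⟨i, hi⟩, rfl⟩))
  refine ⟨E, ⟨Module.Basis.mk hli fun x _ => ?_⟩⟩
  rcases eq_or_ne x 0 with rfl | h0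
  · exact zero_mem _
  · obtain ⟨m, -, hmL⟩ := hmax x h0
    exact hspan m x hmL

end PID

section Ext

open CategoryTheory

/-- If `Ext¹(A, Y) = 0` then every morphism `K ⟶ Y` extends along `K ⟶ G`, for a projective
resolution `0 ⟶ K ⟶ G ⟶ A ⟶ 0`. -/
theorem CategoryTheory.ShortComplex.ShortExact.exists_extension_of_isZero_ext
    {R : Type*} [Ring R] {C : Type*} [Category* C] [Abelian C] [Linear R C] [EnoughProjectives C]
    {S : ShortComplex C} (hS : S.ShortExact) [Projective S.X₁] [Projective S.X₂] {Y : C}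
    (hExt : Limits.IsZero (((Ext R C 1).obj (Opposite.op S.X₃)).obj Y)) (φ : S.X₁ ⟶ Y) :
    ∃ ψ : S.X₂ ⟶ Y, S.f ≫ ψ = φ := by
  have := hS.epi_g
  have := hS.mono_f
  let P := projectiveResolution S.X₃
  have hcob : ∀ x : P.complex.X 1 ⟶ Y, P.complex.d 2 1 ≫ x = 0 →
      ∃ y : P.complex.X 0 ⟶ Y, P.complex.d 1 0 ≫ y = x := by
    intro x hx
    have h1 := (hExt.of_iso (P.isoExt (R := R) 1 Y).symm)
    rw [← HomologicalComplex.exactAt_iff_isZero_homology,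
      HomologicalComplex.exactAt_iff' _ 0 1 2 (by simp) (by simp),
      ShortComplex.moduleCat_exact_iff] at h1
    exact h1 x hx
  let π : P.complex.X 0 ⟶ S.X₃ := P.π.f 0
  have hπ : P.complex.d 1 0 ≫ π = 0 := P.complex_d_comp_π_f_zero
  have : Epi π := inferInstanceAs (Epi (P.π.f 0))
  let a : P.complex.X 0 ⟶ S.X₂ := Projective.factorThru π S.g
  have ha : a ≫ S.g = π := Projective.factorThru_comp _ _
  let c : S.X₂ ⟶ P.complex.X 0 := Projective.factorThru S.g π
  have hc : c ≫ π = S.g := Projective.factorThru_comp _ _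
  let b : P.complex.X 1 ⟶ S.X₁ := hS.exact.lift (P.complex.d 1 0 ≫ a) (by simp [ha, hπ])
  have hb : b ≫ S.f = P.complex.d 1 0 ≫ a := hS.exact.lift_f _ _
  have hdb : P.complex.d 2 1 ≫ b = 0 := by
    rw [← cancel_mono S.f]; simp [hb]
  let e : S.X₁ ⟶ P.complex.X 1 :=
    P.exact₀.liftFromProjective (S.f ≫ c)
      (by rw [Category.assoc]; exact (congrArg (S.f ≫ ·) hc).trans S.zero)
  have he : e ≫ P.complex.d 1 0 = S.f ≫ c := P.exact₀.liftFromProjective_comp _ _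
  let s : S.X₂ ⟶ S.X₁ := hS.exact.lift (𝟙 _ - c ≫ a) (by simp [ha, hc])
  have hs : s ≫ S.f = 𝟙 _ - c ≫ a := hS.exact.lift_f _ _
  have hhtpy : S.f ≫ s + e ≫ b = 𝟙 _ := by
    rw [← cancel_mono S.f]
    simp [hs, hb, reassoc_of% he]
  obtain ⟨y, hy⟩ := hcob (b ≫ φ) (by rw [reassoc_of% hdb, Limits.zero_comp])
  refine ⟨c ≫ y + s ≫ φ, ?_⟩
  calc S.f ≫ (c ≫ y + s ≫ φ) = (S.f ≫ s + e ≫ b) ≫ φ := by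
        rw [Preadditive.comp_add, Preadditive.add_comp, ← reassoc_of% he, hy, Category.assoc,
          Category.assoc, add_comm]
    _ = φ := by rw [hhtpy, Category.id_comp]

end Ext

section Shift

variable {ι : Type*}

/-- The automorphism of a polynomial ring which translates the variable `i` by `1`. -/
noncomputable def MvPolynomial.translateVar (R : Type*) [CommRing R] [DecidableEq ι] (i : ι) :
    MvPolynomial ι R ≃ₐ[R] MvPolynomial ι R :=
  AlgEquiv.ofAlgHom
    (aeval fun j => X j + C (if j = i then 1 else 0)) (aeval fun j => X j - C (if j = i then 1 else 0))
    (by ext j; simp) (by ext j; simp)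

theorem MvPolynomial.translateVar_X (R : Type*) [CommRing R] [DecidableEq ι] (i j : ι) :
    translateVar R i (X j) = X j + C (if j = i then 1 else 0) := by
  simp [translateVar]

theorem MvPolynomial.translateVar_eq_self {R : Type*} [CommRing R] [DecidableEq ι] {i : ι}
    {p : MvPolynomial ι R} (hi : i ∉ p.vars) : translateVar R i p = p := by
  refine hom_congr_vars (f₁ := (translateVar R i : MvPolynomial ι R →+* MvPolynomial ι R))
    (f₂ := RingHom.id _) ?_ ?_ rfl
  · ext r : 1
    exact (translateVar R i).commutes r
  · intro j hj _
    have hji : j ≠ i := by rintro rfl; exact hi hj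
    simp [translateVar_X, hji]

/-- A polynomial ring over a field of rational functions in the variables `ι` carries elements and
endomorphisms indexed by `ι`, where the endomorphism `σ i` translates `t i` by `1`, fixes the
other `t j`, and each element of the ring is fixed by all but finitely many `σ i`. -/
theorem exists_translations (ι : Type*) :
    ∃ (t : ι → Polynomial (FractionRing (MvPolynomial ι ℚ)))
      (σ : ι → Polynomial (FractionRing (MvPolynomial ι ℚ)) →+*
        Polynomial (FractionRing (MvPolynomial ι ℚ))),
      (∀ i, σ i (t i) = t i + 1) ∧ (∀ i j, i ≠ j → σ i (t j) = t j) ∧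
        ∀ r, {i | σ i r ≠ r}.Finite := by
  classical
  let s (i : ι) : FractionRing (MvPolynomial ι ℚ) ≃+* FractionRing (MvPolynomial ι ℚ) :=
    IsFractionRing.ringEquivOfRingEquiv (MvPolynomial.translateVar ℚ i).toRingEquiv
  have hs (i : ι) (p : MvPolynomial ι ℚ) : s i (algebraMap _ _ p) =
      algebraMap (MvPolynomial ι ℚ) _ (MvPolynomial.translateVar ℚ i p) :=
    IsFractionRing.ringEquivOfRingEquiv_algebraMap _ _
  refine ⟨fun i => Polynomial.C (algebraMap (MvPolynomial ι ℚ) _ (MvPolynomial.X i)),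
    fun i => Polynomial.mapRingHom (s i : _ →+* _), fun i => ?_, fun i j hij => ?_, fun r => ?_⟩
  · simp [hs, MvPolynomial.translateVar_X]
  · simp [hs, MvPolynomial.translateVar_X, hij.symm]
  · have hfin (x : FractionRing (MvPolynomial ι ℚ)) : {i | s i x ≠ x}.Finite := by
      obtain ⟨p, q, -, rfl⟩ := IsFractionRing.div_surjective (A := MvPolynomial ι ℚ) x
      refine (p.vars ∪ q.vars).finite_toSet.subset fun i hi => ?_
      by_contra h
      simp only [Finset.coe_union, Set.mem_union, Finset.mem_coe, not_or] at h
      exact hi (by rw [map_div₀, hs, hs, MvPolynomial.translateVar_eq_self h.1,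
        MvPolynomial.translateVar_eq_self h.2])
    refine (r.support.finite_toSet.biUnion fun n _ => hfin (r.coeff n)).subset fun i hi => ?_
    contrapose! hi
    simp only [Set.mem_iUnion, not_exists, Set.mem_ofPred_eq, not_not] at hi ⊢
    ext n
    by_cases hn : n ∈ r.support
    · simpa using hi n hn
    · simp [Polynomial.notMem_support_iff.1 hn]

end Shift

section Retraction

variable {R : Type*} [CommRing R] {I E J : Type*}

/-- A functional on a submodule `K` of a free module taking the values `t (f e)` on a basis `b e`
of `K`, where `σ (f e)` fixes the coordinates of the basis and translates only `t (f e)`, extends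
to the whole module only if `K` is a direct summand. -/
theorem Submodule.exists_retraction_of_translations {K : Submodule R (I →₀ R)}
    (b : Module.Basis E R K) (t : J → R) (σ : J → R →+* R) (hσt : ∀ j, σ j (t j) = t j + 1)
    (hσt' : ∀ i j, i ≠ j → σ i (t j) = t j) (hσ : ∀ r, {j | σ j r ≠ r}.Finite)
    (f : E ↪ J) (hf : ∀ e e' i, σ (f e) ((b e' : I →₀ R) i) = (b e' : I →₀ R) i)
    (ψ : (I →₀ R) →ₗ[R] R) (hψ : ∀ e, ψ (b e) = t (f e)) :
    ∃ s : (I →₀ R) →ₗ[R] K, ∀ x : K, s x = x := by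
  classical
  have hfin (i : I) :
      {e | σ (f e) (ψ (Finsupp.single i 1)) - ψ (Finsupp.single i 1) ≠ 0}.Finite :=
    ((hσ (ψ (Finsupp.single i 1))).preimage f.injective.injOn).subset fun _ he =>
      sub_ne_zero.1 he
  let D : (I →₀ R) →ₗ[R] E →₀ R := Finsupp.linearCombination R fun i =>
    Finsupp.ofSupportFinite
      (fun e => σ (f e) (ψ (Finsupp.single i 1)) - ψ (Finsupp.single i 1)) (hfin i)
  have hD (x : I →₀ R) (e : E) (hx : ∀ i, σ (f e) (x i) = x i) :
      D x e = σ (f e) (ψ x) - ψ x := by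
    have hψx : ψ x = ∑ i ∈ x.support, x i * ψ (Finsupp.single i 1) := by
      conv_lhs => rw [← Finsupp.sum_single x]
      simp only [Finsupp.sum, map_sum]
      refine Finset.sum_congr rfl fun i _ => ?_
      rw [← smul_eq_mul, ← map_smul, Finsupp.smul_single_one]
    rw [hψx, map_sum, ← Finset.sum_sub_distrib, Finsupp.linearCombination_apply, Finsupp.sum,
      Finsupp.finsetSum_apply]
    refine Finset.sum_congr rfl fun i _ => ?_
    rw [map_mul, hx, ← mul_sub]
    rfl
  refine ⟨b.repr.symm.toLinearMap ∘ₗ D, fun x => ?_⟩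
  suffices h : (b.repr.symm.toLinearMap ∘ₗ D) ∘ₗ K.subtype = LinearMap.id from
    LinearMap.congr_fun h x
  refine b.ext fun e' => ?_
  suffices h : D (b e') = Finsupp.single e' 1 by simp [h]
  ext e
  rw [hD _ _ fun i => hf e e' i, hψ]
  rcases eq_or_ne e e' with rfl | hne
  · simp [hσt]
  · rw [hσt' _ _ (f.injective.ne hne), sub_self, Finsupp.single_eq_of_ne hne]

end Retraction

/-- If every `r` is fixed by all but finitely many `σ j` and there are more than `κ` indices `j`,
then a set `E` of size at most `κ` embeds into the indices whose `σ j` fixes all entries of a given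
`κ × κ` matrix. -/
theorem exists_embedding_fixing {R : Type*} {I E J : Type u} {κ : Cardinal.{u}} (hκ : ℵ₀ ≤ κ)
    (hI : #I ≤ κ) (hE : #E ≤ κ) (hJ : κ < #J) (σ : J → R → R)
    (hσ : ∀ r, {j | σ j r ≠ r}.Finite) (m : E → I → R) :
    ∃ f : E ↪ J, ∀ e e' i, σ (f e) (m e' i) = m e' i := by
  let T : Set J := ⋃ p : E × I, {j | σ j (m p.1 p.2) ≠ m p.1 p.2}
  have hT : #T ≤ κ := by
    have hsup : ⨆ p : E × I, #{j | σ j (m p.1 p.2) ≠ m p.1 p.2} ≤ κ :=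
      ciSup_le' fun p => (hσ (m p.1 p.2)).lt_aleph0.le.trans hκ
    have hEI : #(E × I) ≤ κ := by
      rw [mk_prod, lift_id, lift_id]
      exact (mul_le_mul' hE hI).trans (mul_eq_self hκ).le
    exact (mk_iUnion_le _).trans ((mul_le_mul' hEI hsup).trans (mul_eq_self hκ).le)
  have : Infinite J := infinite_iff.2 (hκ.trans hJ.le)
  have hTc : #(Tᶜ : Set J) = #J := mk_compl_of_infinite T (hT.trans_lt hJ)
  obtain ⟨g⟩ : Nonempty (E ↪ (Tᶜ : Set J)) := by
    rw [← Cardinal.le_def, hTc]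
    exact hE.trans hJ.le
  refine ⟨g.trans (Function.Embedding.subtype _), fun e e' i => ?_⟩
  by_contra h
  exact (g e).2 (Set.mem_iUnion.2 ⟨(e', i), h⟩)

/-- A linear surjection whose kernel is the image of a retraction has a linear section. -/
theorem LinearMap.exists_section_of_retraction_ker {R M N : Type*} [Ring R] [AddCommGroup M]
    [Module R M] [AddCommGroup N] [Module R N] (π : M →ₗ[R] N) (hπ : Function.Surjective π)
    (s : M →ₗ[R] ker π) (hs : ∀ x : ker π, s x = x) :
    ∃ g : N →ₗ[R] M, π ∘ₗ g = LinearMap.id := by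
  let q : M →ₗ[R] M := LinearMap.id - (ker π).subtype ∘ₗ s
  have hq : ker π ≤ ker q := fun x hx => by
    simpa [q, sub_eq_zero] using (congrArg Subtype.val (hs ⟨x, hx⟩)).symm
  refine ⟨(ker π).liftQ q hq ∘ₗ (π.quotKerEquivOfSurjective hπ).symm, ?_⟩
  ext y
  obtain ⟨x, rfl⟩ := hπ y
  have hx : (π.quotKerEquivOfSurjective hπ).symm (π x) = (ker π).mkQ x := by
    rw [LinearEquiv.symm_apply_eq]; rfl
  simp [hx, q]

theorem Module.Free.of_section_finsupp {R I M : Type*} [CommRing R] [IsDomain R]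
    [IsPrincipalIdealRing R] [AddCommGroup M] [Module R M] {π : (I →₀ R) →ₗ[R] M}
    {g : M →ₗ[R] I →₀ R} (h : π ∘ₗ g = LinearMap.id) : Module.Free R M := by
  obtain ⟨E, ⟨b⟩⟩ := (LinearMap.range g).exists_basis_subset_finsupp
  have hinj : Function.Injective g :=
    Function.LeftInverse.injective (g := π) fun x => LinearMap.congr_fun h x
  exact .of_basis (b.map (LinearEquiv.ofInjective g hinj).symm)

theorem IsWhitehead.exists_extension {R A G : Type u} [CommRing R] [AddCommGroup A] [Module R A]
    [AddCommGroup G] [Module R G] (hA : IsWhitehead R A) {π : G →ₗ[R] A}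
    (hπ : Function.Surjective π) [Module.Projective R G] [Module.Projective R (LinearMap.ker π)]
    (φ : LinearMap.ker π →ₗ[R] R) : ∃ ψ : G →ₗ[R] R, ∀ x : LinearMap.ker π, ψ x = φ x := by
  let S : CategoryTheory.ShortComplex (ModuleCat.{u} R) :=
    ModuleCat.shortComplexOfCompEqZero (LinearMap.ker π).subtype π (by ext x; exact x.2)
  have hS : S.ShortExact :=
    { exact := by
        rw [CategoryTheory.ShortComplex.moduleCat_exact_iff]
        exact fun x hx => ⟨⟨x, hx⟩, rfl⟩
      mono_f := (ModuleCat.mono_iff_injective _).2 (LinearMap.ker π).subtype_injective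
      epi_g := (ModuleCat.epi_iff_surjective _).2 hπ }
  have : CategoryTheory.Projective S.X₁ := (IsProjective.iff_projective _).1 ‹_›
  have : CategoryTheory.Projective S.X₂ := (IsProjective.iff_projective _).1 ‹_›
  have : Subsingleton (ext1 R A R) := hA
  obtain ⟨ψ, hψ⟩ := hS.exists_extension_of_isZero_ext (R := R) (Y := ModuleCat.of R R)
    (ModuleCat.isZero_of_subsingleton (ext1 R A R)) (ModuleCat.ofHom φ)
  exact ⟨ψ.hom, fun x => congrArg (fun h => h.hom x) hψ⟩

/-- Over a principal ideal domain with more than `κ` independent translations, each element being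
fixed by all but finitely many of them, every `κ`-generated Whitehead module is free. -/
theorem IsWhitehead.free_of_translations {R A J : Type u} [CommRing R] [IsDomain R]
    [IsPrincipalIdealRing R] [AddCommGroup A] [Module R A] {κ : Cardinal.{u}} (hκ : ℵ₀ ≤ κ)
    (hJ : κ < #J) (t : J → R) (σ : J → R →+* R) (hσt : ∀ j, σ j (t j) = t j + 1)
    (hσt' : ∀ i j, i ≠ j → σ i (t j) = t j) (hσ : ∀ r, {j | σ j r ≠ r}.Finite)
    (hW : IsWhitehead R A) (hgen : IsGenerated R A κ) : Module.Free R A := by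
  obtain ⟨S, hS, hspan⟩ := hgen
  let π := Finsupp.linearCombination R (Subtype.val : S → A)
  have hπ : Function.Surjective π := by
    rw [← LinearMap.range_eq_top, Finsupp.range_linearCombination, Subtype.range_coe, hspan]
  obtain ⟨E, ⟨b⟩⟩ := (LinearMap.ker π).exists_basis_subset_finsupp
  have : Module.Projective R (LinearMap.ker π) := .of_basis b
  obtain ⟨f, hf⟩ := exists_embedding_fixing hκ hS ((mk_set_le E).trans hS) hJ
    (fun j r => σ j r) hσ fun e i => (b e : S →₀ R) i
  obtain ⟨ψ, hψ⟩ := hW.exists_extension hπ (b.constr ℕ fun e => t (f e))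
  obtain ⟨s, hs⟩ := Submodule.exists_retraction_of_translations b t σ hσt hσt' hσ f hf ψ
    fun e => by rw [hψ, b.constr_basis]
  obtain ⟨g, hg⟩ := π.exists_section_of_retraction_ker hπ s hs
  exact .of_section_finsupp hg

/-- Eklof–Shelah, proof of Theorem 2: for `R = 𝓕[X]` where
`𝓕 = ℚ(t_ν : ν < ω₂)` is the field of rational functions in `ℵ₂` algebraically
independent variables over `ℚ`, every `ℵ₁`-generated `ℵ₁`-free non-free `R`-module `A`
satisfies `Ext¹_R(A, R) ≠ 0`; in particular every `ℵ₁`-generated `ℵ₁`-free Whitehead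
`R`-module is free. -/
theorem ext_ne_zero_of_aleph_one_free_not_free (ι : Type u) (hι : #ι = aleph 2)
    (A : Type u) (_ : AddCommGroup A)
    (_ : Module (Polynomial (FractionRing (MvPolynomial ι ℚ))) A)
    (hgen : IsGenerated (Polynomial (FractionRing (MvPolynomial ι ℚ))) A (aleph 1))
    (hfree : IsKappaFree (Polynomial (FractionRing (MvPolynomial ι ℚ))) A (aleph 1))
    (hnotfree : ¬ Module.Free (Polynomial (FractionRing (MvPolynomial ι ℚ))) A) :
    ¬ IsWhitehead (Polynomial (FractionRing (MvPolynomial ι ℚ))) A := by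
  obtain ⟨t, σ, hσt, hσt', hσ⟩ := exists_translations ι
  have hlt : aleph 1 < #ι := by
    rw [hι]
    exact aleph_lt_aleph.2 one_lt_two
  exact fun hW => hnotfree
    (hW.free_of_translations (aleph0_le_aleph 1) hlt t σ hσt hσt' hσ hgen)
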